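/- arXiv:1407.4720 — 2 statements merged into one kernel-verified Lean document; each statement's English description precedes it below -/
import Mathlib

section
/- Let n ≥ 1 and d ≥ 1 be integers. For any integer t, the number of points (x_1, ..., x_d) ∈ {1, ..., n}^d with x_1 + x_2 + ... + x_d = t is at most (n+d-2)^{d-1}·√(2/d). -/
/-!
The number of points is `π⁻¹ ∫ e^{-2itθ} S(θ)^d dθ` over a period, where `S(θ) = ∑_{k ≤ n} e^{2ikθ}`
has modulus `|sin nθ / sin θ|`, so it is at most `(2 / π) ∫₀^{π/2} |sin nθ / sin θ|^d dθ`.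

The function `e^{x² / 6} sinc x` is decreasing on `[0, π]`; comparing its values at `θ` and `nθ`
gives, for `θ ≤ π / n`, the Gaussian majorant `|S(θ)| ≤ n e^{-(n² - 1) θ² / 6}` and hence a
contribution close to `√(6 / (π d)) n^(d-1)`, while `√(6 / π) < √2`. On `[π / n, π / 2]` we have
`|S(θ)| ≤ 1 / sin θ ≤ n / 2`, and the explicit integral of `sin⁻⁴` shows that the contribution fits
into the remaining slack when `d ≥ 4`. For `d ≤ 3` or `n = 1` the points are counted directly.
-/

open Finset Real

lemma mul_cos_le_sin {x : ℝ} (h0 : 0 ≤ x) (hπ : x ≤ π) : x * cos x ≤ sin x := by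
  have hderiv (y : ℝ) : HasDerivAt (fun y ↦ y * cos y - sin y) (-(y * sin y)) y :=
    (((hasDerivAt_id' y).mul (hasDerivAt_cos y)).sub (hasDerivAt_sin y)).congr_deriv (by ring)
  have hanti : AntitoneOn (fun y ↦ y * cos y - sin y) (Set.Icc 0 π) := by
    refine antitoneOn_of_hasDerivWithinAt_nonpos (convex_Icc 0 π) (by fun_prop)
      (fun y _ ↦ (hderiv y).hasDerivWithinAt) fun y hy ↦ ?_
    rw [interior_Icc] at hy
    exact neg_nonpos.2 (mul_nonneg hy.1.le (sin_nonneg_of_nonneg_of_le_pi hy.1.le hy.2.le))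
  simpa using hanti ⟨le_rfl, pi_pos.le⟩ ⟨h0, hπ⟩ h0

lemma mul_cos_add_sq_mul_sin_div_three_le_sin {x : ℝ} (h0 : 0 ≤ x) (hπ : x ≤ π) :
    x * cos x + x ^ 2 * sin x / 3 ≤ sin x := by
  have hderiv (y : ℝ) : HasDerivAt (fun y ↦ y * cos y + y ^ 2 * sin y / 3 - sin y)
      (y / 3 * (y * cos y - sin y)) y :=
    ((((hasDerivAt_id' y).mul (hasDerivAt_cos y)).add
      (((hasDerivAt_pow 2 y).mul (hasDerivAt_sin y)).div_const 3)).sub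
        (hasDerivAt_sin y)).congr_deriv (by push_cast; ring)
  have hanti : AntitoneOn (fun y ↦ y * cos y + y ^ 2 * sin y / 3 - sin y) (Set.Icc 0 π) := by
    refine antitoneOn_of_hasDerivWithinAt_nonpos (convex_Icc 0 π) (by fun_prop)
      (fun y _ ↦ (hderiv y).hasDerivWithinAt) fun y hy ↦ ?_
    rw [interior_Icc] at hy
    exact mul_nonpos_of_nonneg_of_nonpos (by linarith [hy.1])
      (sub_nonpos.2 (mul_cos_le_sin hy.1.le hy.2.le))
  simpa using hanti ⟨le_rfl, pi_pos.le⟩ ⟨h0, hπ⟩ h0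

lemma antitoneOn_exp_sq_div_six_mul_sinc :
    AntitoneOn (fun x ↦ exp (x ^ 2 / 6) * sinc x) (Set.Icc 0 π) := by
  have hderiv {x : ℝ} (hx : 0 < x) : HasDerivAt (fun x ↦ exp (x ^ 2 / 6) * sinc x)
      (exp (x ^ 2 / 6) / x ^ 2 * (x * cos x + x ^ 2 * sin x / 3 - sin x)) x := by
    have hquot := ((hasDerivAt_pow 2 x).div_const 6).exp.mul
      ((hasDerivAt_sin x).div (hasDerivAt_id' x) hx.ne')
    refine (hquot.congr_of_eventuallyEq ?_).congr_deriv ?_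
    · filter_upwards [eventually_ne_nhds hx.ne'] with y hy
      rw [sinc_of_ne_zero hy]
      rfl
    · simp only [Pi.div_apply]
      field_simp
      ring
  refine antitoneOn_of_hasDerivWithinAt_nonpos (convex_Icc 0 π)
    (Continuous.continuousOn (.mul (by fun_prop) continuous_sinc))
    (f' := fun x ↦ exp (x ^ 2 / 6) / x ^ 2 * (x * cos x + x ^ 2 * sin x / 3 - sin x))
    (fun x hx ↦ ?_) fun x hx ↦ ?_ <;> rw [interior_Icc] at hx
  · exact (hderiv hx.1).hasDerivWithinAt
  · exact mul_nonpos_of_nonneg_of_nonpos (by positivity)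
      (sub_nonpos.2 (mul_cos_add_sq_mul_sin_div_three_le_sin hx.1.le hx.2.le))

lemma sin_mul_le_mul_sin_mul_exp {c θ : ℝ} (hc : 1 ≤ c) (hθ : 0 ≤ θ) (hcθ : c * θ ≤ π) :
    sin (c * θ) ≤ c * sin θ * exp (-((c ^ 2 - 1) * θ ^ 2 / 6)) := by
  obtain rfl | hθ := hθ.eq_or_lt
  · simp
  have hle : θ ≤ c * θ := le_mul_of_one_le_left hθ.le hc
  have hsinc : exp ((c * θ) ^ 2 / 6) * sinc (c * θ) ≤ exp (θ ^ 2 / 6) * sinc θ :=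
    antitoneOn_exp_sq_div_six_mul_sinc ⟨hθ.le, hle.trans hcθ⟩ ⟨hθ.le.trans hle, hcθ⟩ hle
  have hcθ0 : 0 < c * θ := hθ.trans_le hle
  rw [sinc_of_ne_zero hcθ0.ne', sinc_of_ne_zero hθ.ne', ← mul_div_assoc, ← mul_div_assoc,
    div_le_div_iff₀ hcθ0 hθ] at hsinc
  have hexp : exp (-((c ^ 2 - 1) * θ ^ 2 / 6)) = exp (θ ^ 2 / 6) / exp ((c * θ) ^ 2 / 6) := by
    rw [← exp_sub]
    ring_nf
  rw [hexp, ← mul_div_assoc, le_div_iff₀ (exp_pos _)]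
  exact le_of_mul_le_mul_right (by linarith) hθ

lemma cot_le_inv {x : ℝ} (h0 : 0 < x) (hπ : x ≤ π) : cot x ≤ x⁻¹ := by
  obtain rfl | hπ := hπ.eq_or_lt
  · simp [cot_eq_cos_div_sin, pi_pos.le]
  rw [cot_eq_cos_div_sin, div_le_iff₀ (sin_pos_of_pos_of_lt_pi h0 hπ), inv_mul_eq_div,
    le_div_iff₀ h0, mul_comm]
  exact mul_cos_le_sin h0.le hπ.le

lemma hasDerivAt_cot {x : ℝ} (hx : sin x ≠ 0) : HasDerivAt cot (-((sin x)⁻¹ ^ 2)) x := by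
  have hquot := (hasDerivAt_cos x).div (hasDerivAt_sin x) hx
  refine (hquot.congr_of_eventuallyEq (.of_forall cot_eq_cos_div_sin)).congr_deriv ?_
  field_simp
  linarith [sin_sq_add_cos_sq x]

lemma integral_inv_sin_pow_four {a : ℝ} (h0 : 0 < a) (ha : a ≤ π / 2) :
    ∫ θ in a..π / 2, (sin θ)⁻¹ ^ 4 = cot a + cot a ^ 3 / 3 := by
  have hsin : ∀ θ ∈ Set.uIcc a (π / 2), sin θ ≠ 0 := fun θ hθ ↦ by
    rw [Set.uIcc_of_le ha] at hθ
    exact (sin_pos_of_pos_of_lt_pi (by linarith [hθ.1]) (by linarith [hθ.2, pi_pos])).ne'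
  have hderiv : ∀ θ ∈ Set.uIcc a (π / 2),
      HasDerivAt (fun θ ↦ -(cot θ + cot θ ^ 3 / 3)) ((sin θ)⁻¹ ^ 4) θ := fun θ hθ ↦ by
    have hcot := hasDerivAt_cot (hsin θ hθ)
    have hpyth : 1 + cot θ ^ 2 = (sin θ)⁻¹ ^ 2 := by
      rw [cot_eq_cos_div_sin]
      field_simp [hsin θ hθ]
      exact sin_sq_add_cos_sq θ
    refine (hcot.add ((hcot.pow 3).div_const 3)).neg.congr_deriv ?_
    push_cast
    linear_combination (sin θ)⁻¹ ^ 2 * hpyth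
  rw [intervalIntegral.integral_eq_sub_of_hasDerivAt hderiv]
  · simp [cot_eq_cos_div_sin]
  · exact (ContinuousOn.pow (continuousOn_sin.inv₀ hsin) 4).intervalIntegrable

lemma inv_sin_le_half_of_pi_div_le {c θ : ℝ} (hc : 0 < c) (hcθ : π / c ≤ θ) (hθ : θ ≤ π / 2) :
    (sin θ)⁻¹ ≤ c / 2 := by
  have h0 : 0 ≤ θ := (by positivity : 0 ≤ π / c).trans hcθ
  rw [← inv_div]
  refine inv_anti₀ (by positivity) ?_
  calc 2 / c = 2 / π * (π / c) := by field_simp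
    _ ≤ 2 / π * θ := by gcongr
    _ ≤ sin θ := mul_le_sin h0 hθ

lemma integral_exp_neg_mul_sq_le {a b : ℝ} (ha : 0 ≤ a) (hb : 0 < b) :
    ∫ θ in 0..a, exp (-b * θ ^ 2) ≤ √(π / b) / 2 := by
  rw [intervalIntegral.integral_of_le ha, ← integral_gaussian_Ioi]
  exact MeasureTheory.setIntegral_mono_set (integrable_exp_neg_mul_sq hb).integrableOn
    (.of_forall fun θ ↦ (exp_pos _).le) (.of_forall Set.Ioc_subset_Ioi_self)

lemma integral_symm_eq_two_mul_of_even {f : ℝ → ℝ} (hf : Continuous f) (heven : f.Even) (a : ℝ) :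
    ∫ θ in -a..a, f θ = 2 * ∫ θ in 0..a, f θ := by
  have hneg : ∫ θ in -a..0, f θ = ∫ θ in 0..a, f θ := by
    simpa [heven _] using (intervalIntegral.integral_comp_neg (a := 0) (b := a) f).symm
  rw [← intervalIntegral.integral_add_adjacent_intervals (b := 0) (hf.intervalIntegrable _ _)
    (hf.intervalIntegrable _ _), hneg, two_mul]

lemma integral_exp_two_mul_int_mul_I (m : ℤ) :
    ∫ θ in -(π / 2)..π / 2, Complex.exp ((2 * m * θ : ℝ) * Complex.I) =
      if m = 0 then (π : ℂ) else 0 := by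
  split_ifs with hm
  · simp [hm]
  have hc : 2 * m * Complex.I ≠ 0 := by simp [hm]
  have hperiod : Complex.exp (2 * m * Complex.I * (π / 2 : ℝ)) =
      Complex.exp (2 * m * Complex.I * (-(π / 2) : ℝ)) :=
    Complex.exp_eq_exp_iff_exists_int.2 ⟨m, by push_cast; ring⟩
  calc ∫ θ in -(π / 2)..π / 2, Complex.exp ((2 * m * θ : ℝ) * Complex.I)
      = ∫ θ in -(π / 2)..π / 2, Complex.exp (2 * m * Complex.I * (θ : ℝ)) := by
        congr! 3
        push_cast
        ring
    _ = 0 := by rw [integral_exp_mul_complex hc, hperiod, sub_self, zero_div]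

lemma integral_sum_exp_two_mul_int_mul_I {ι : Type*} (S : Finset ι) (f : ι → ℤ) :
    ∫ θ in -(π / 2)..π / 2, ∑ x ∈ S, Complex.exp ((2 * f x * θ : ℝ) * Complex.I) =
      π * #{x ∈ S | f x = 0} := by
  rw [intervalIntegral.integral_finsetSum fun x _ ↦
    Continuous.intervalIntegrable (by fun_prop) _ _]
  simp_rw [integral_exp_two_mul_int_mul_I]
  rw [← sum_filter, sum_const, nsmul_eq_mul, mul_comm]

lemma sum_Icc_one_reflect {M : Type*} [AddCommMonoid M] (f : ℕ → M) (n : ℕ) :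
    ∑ a ∈ Icc 1 n, f (n + 1 - a) = ∑ a ∈ Icc 1 n, f a := by
  simpa [← Ico_add_one_right_eq_Icc] using sum_Ico_reflect f 1 (m := n + 1) (n := n + 1) (by omega)

lemma sq_sub_one_le_two_mul_sum_abs (n : ℕ) :
    (n : ℤ) ^ 2 - 1 ≤ 2 * ∑ a ∈ Icc 1 n, |(n : ℤ) + 1 - 2 * a| := by
  induction n using Nat.twoStepInduction with
  | zero => simp
  | one => simp
  | more n ih _ =>
    have hshift : ∑ a ∈ Icc 2 (n + 1), |((n + 2 : ℕ) : ℤ) + 1 - 2 * a| =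
        ∑ a ∈ Icc 1 n, |(n : ℤ) + 1 - 2 * a| := by
      rw [← Finset.map_add_right_Icc 1 n 1, sum_map]
      refine sum_congr rfl fun a _ ↦ congrArg _ ?_
      simp only [addRightEmbedding_apply]
      push_cast
      ring
    have hfirst : |((n + 2 : ℕ) : ℤ) + 1 - 2 * (1 : ℕ)| = n + 1 := by
      rw [abs_of_nonneg] <;> push_cast <;> linarith
    have hlast : |((n + 2 : ℕ) : ℤ) + 1 - 2 * (n + 2 : ℕ)| = n + 1 := by
      rw [abs_of_nonpos] <;> push_cast <;> linarith
    rw [sum_Icc_succ_top (by omega), ← Finset.add_sum_Ioc_eq_sum_Icc (by omega)]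
    have : Ioc 1 (n + 1) = Icc 2 (n + 1) := rfl
    rw [this, hshift, hfirst, hlast]
    push_cast
    linarith

/-- The points of `A ^ d` on the hyperplane `x₁ + ⋯ + x_d = t`; for `A = {1, …, n}` these are the
points to be counted. -/
def hyperplaneSection (A : Finset ℕ) (d : ℕ) (t : ℤ) : Finset (Fin d → ℕ) :=
  {x ∈ Fintype.piFinset fun _ ↦ A | ∑ i, (x i : ℤ) = t}

lemma mem_hyperplaneSection {A : Finset ℕ} {d : ℕ} {t : ℤ} {x : Fin d → ℕ} :
    x ∈ hyperplaneSection A d t ↔ (∀ i, x i ∈ A) ∧ ∑ i, (x i : ℤ) = t := by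
  simp [hyperplaneSection]

lemma cons_mem_hyperplaneSection {A : Finset ℕ} {d : ℕ} {t : ℤ} {a : ℕ} {x : Fin d → ℕ} :
    (Fin.cons a x : Fin (d + 1) → ℕ) ∈ hyperplaneSection A (d + 1) t ↔
      a ∈ A ∧ x ∈ hyperplaneSection A d (t - a) := by
  simp [mem_hyperplaneSection, Fin.forall_fin_succ, Fin.sum_univ_succ, and_assoc,
    eq_sub_iff_add_eq']

lemma card_hyperplaneSection_succ (A : Finset ℕ) (d : ℕ) (t : ℤ) :
    #(hyperplaneSection A (d + 1) t) = ∑ a ∈ A, #(hyperplaneSection A d (t - a)) := by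
  rw [← card_sigma]
  refine card_nbij' (fun x ↦ ⟨x 0, Fin.tail x⟩) (fun y ↦ Fin.cons y.1 y.2) ?_ ?_ ?_ ?_
  · intro x hx
    rw [← Fin.cons_self_tail x] at hx
    simpa using cons_mem_hyperplaneSection.1 hx
  · intro y hy
    exact cons_mem_hyperplaneSection.2 (by simpa using hy)
  · intro x _
    exact Fin.cons_self_tail x
  · intro y _
    simp

lemma card_hyperplaneSection_succ_le (A : Finset ℕ) (d : ℕ) (t : ℤ) :
    #(hyperplaneSection A (d + 1) t) ≤ #A ^ d := by
  induction d generalizing t with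
  | zero =>
    refine card_le_one.2 fun x hx y hy ↦ funext fun i ↦ ?_
    have hx := (mem_hyperplaneSection.1 hx).2
    have hy := (mem_hyperplaneSection.1 hy).2
    simp only [Nat.reduceAdd, univ_unique, Fin.default_eq_zero, sum_singleton] at hx hy
    rw [Fin.fin_one_eq_zero i]
    omega
  | succ d ih =>
    rw [card_hyperplaneSection_succ, pow_succ', ← smul_eq_mul]
    exact sum_le_card_nsmul _ _ _ fun a _ ↦ ih (t - a)

lemma card_hyperplaneSection_Icc_two_le (n : ℕ) (t : ℤ) :
    (#(hyperplaneSection (Icc 1 n) 2 t) : ℤ) ≤ max 0 (n - |t - (n + 1)|) := by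
  have hcard : #(hyperplaneSection (Icc 1 n) 2 t) ≤ #(Icc (max 1 (t - n)) (min n (t - 1))) := by
    refine card_le_card_of_injOn (fun x ↦ (x 0 : ℤ)) (fun x hx ↦ ?_) fun x hx y hy hxy ↦ ?_
    · simp only [mem_coe, mem_hyperplaneSection, Fin.forall_fin_two, Fin.sum_univ_two,
        mem_Icc, coe_Icc, Set.mem_Icc] at hx ⊢
      omega
    · simp only [mem_coe, mem_hyperplaneSection, Fin.sum_univ_two] at hx hy hxy
      ext i
      fin_cases i <;> simp only [Fin.zero_eta, Fin.mk_one] <;> omega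
  rw [Int.card_Icc] at hcard
  rw [abs_eq_max_neg]
  omega

lemma four_mul_card_hyperplaneSection_Icc_three_le (n : ℕ) (t : ℤ) :
    4 * (#(hyperplaneSection (Icc 1 n) 3 t) : ℤ) ≤ 3 * n ^ 2 + 1 := by
  set c : ℕ → ℤ := fun a ↦ #(hyperplaneSection (Icc 1 n) 2 (t - a)) with hc
  have hsum : (#(hyperplaneSection (Icc 1 n) 3 t) : ℤ) = ∑ a ∈ Icc 1 n, c a := by
    rw [card_hyperplaneSection_succ, Nat.cast_sum]
  -- The sections at `a` and at `n + 1 - a` cannot both be central.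
  have hpair : ∀ a ∈ Icc 1 n, c a + c (n + 1 - a) ≤ 2 * n - |(n : ℤ) + 1 - 2 * a| := by
    intro a ha
    have hleft := card_hyperplaneSection_Icc_two_le n (t - a)
    have hright := card_hyperplaneSection_Icc_two_le n (t - (n + 1 - a : ℕ))
    rw [mem_Icc] at ha
    simp only [hc, abs_eq_max_neg] at hleft hright ⊢
    omega
  have htotal := sum_le_sum hpair
  rw [sum_add_distrib, sum_Icc_one_reflect, ← hsum, sum_sub_distrib, sum_const, Nat.card_Icc,
    nsmul_eq_mul, Nat.add_sub_cancel] at htotal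
  linarith [sq_sub_one_le_two_mul_sum_abs n]

/-- The exponential sum `∑_{k ∈ A} e^{2ikθ}`, whose `d`-th power has the numbers of points of
`A ^ d` on hyperplanes as Fourier coefficients. The factor `2` in the exponent makes its modulus
`|sin nθ / sin θ|` when `A = {1, …, n}`. -/
noncomputable def expSum (A : Finset ℕ) (θ : ℝ) : ℂ :=
  ∑ k ∈ A, Complex.exp ((2 * k * θ : ℝ) * Complex.I)

@[fun_prop]
lemma continuous_expSum (A : Finset ℕ) : Continuous (expSum A) := by
  unfold expSum
  fun_prop

lemma expSum_neg (A : Finset ℕ) (θ : ℝ) : expSum A (-θ) = starRingEnd ℂ (expSum A θ) := by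
  simp [expSum, ← Complex.exp_conj, Complex.conj_ofNat]

lemma expSum_pow (A : Finset ℕ) (d : ℕ) (θ : ℝ) :
    expSum A θ ^ d = ∑ x ∈ Fintype.piFinset fun _ : Fin d ↦ A,
      Complex.exp ((2 * (∑ i, (x i : ℤ) : ℤ) * θ : ℝ) * Complex.I) := by
  rw [expSum, sum_pow']
  refine sum_congr rfl fun x _ ↦ ?_
  rw [← Complex.exp_sum]
  push_cast
  simp_rw [mul_sum, sum_mul]

lemma integral_exp_mul_expSum_pow (A : Finset ℕ) (d : ℕ) (t : ℤ) :
    ∫ θ in -(π / 2)..π / 2, Complex.exp ((-2 * t * θ : ℝ) * Complex.I) * expSum A θ ^ d =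
      π * #(hyperplaneSection A d t) := by
  have hexpand (θ : ℝ) : Complex.exp ((-2 * t * θ : ℝ) * Complex.I) * expSum A θ ^ d =
      ∑ x ∈ Fintype.piFinset fun _ : Fin d ↦ A,
        Complex.exp ((2 * (∑ i, (x i : ℤ) - t : ℤ) * θ : ℝ) * Complex.I) := by
    rw [expSum_pow, mul_sum]
    refine sum_congr rfl fun x _ ↦ ?_
    rw [← Complex.exp_add]
    push_cast
    ring_nf
  simp_rw [hexpand, integral_sum_exp_two_mul_int_mul_I, sub_eq_zero]
  rfl

lemma pi_mul_card_hyperplaneSection_le (A : Finset ℕ) (d : ℕ) (t : ℤ) :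
    π * #(hyperplaneSection A d t) ≤ 2 * ∫ θ in 0..π / 2, ‖expSum A θ‖ ^ d := by
  have heven : (fun θ ↦ ‖expSum A θ‖ ^ d).Even := fun θ ↦ by
    simp only [expSum_neg, Complex.norm_conj]
  calc π * #(hyperplaneSection A d t)
      = ‖∫ θ in -(π / 2)..π / 2,
          Complex.exp ((-2 * t * θ : ℝ) * Complex.I) * expSum A θ ^ d‖ := by
        rw [integral_exp_mul_expSum_pow]
        simp [abs_of_pos pi_pos]
    _ ≤ ∫ θ in -(π / 2)..π / 2,
          ‖Complex.exp ((-2 * t * θ : ℝ) * Complex.I) * expSum A θ ^ d‖ :=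
        intervalIntegral.norm_integral_le_integral_norm (by linarith [pi_pos])
    _ = ∫ θ in -(π / 2)..π / 2, ‖expSum A θ‖ ^ d := by
        simp only [norm_mul, norm_pow, Complex.norm_exp_ofReal_mul_I, one_mul]
    _ = 2 * ∫ θ in 0..π / 2, ‖expSum A θ‖ ^ d :=
        integral_symm_eq_two_mul_of_even (by fun_prop) heven _

lemma norm_expSum_Icc_one_mul_abs_sin (n : ℕ) (θ : ℝ) :
    ‖expSum (Icc 1 n) θ‖ * |sin θ| = |sin (n * θ)| := by
  set z := Complex.exp (Complex.I * (2 * θ : ℝ)) with hz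
  have hpow (k : ℕ) : z ^ k = Complex.exp (Complex.I * (2 * (k * θ) : ℝ)) := by
    rw [hz, ← Complex.exp_nat_mul]
    push_cast
    ring_nf
  have hexp : expSum (Icc 1 n) θ = ∑ k ∈ Ico 1 (n + 1), z ^ k := by
    refine sum_congr rfl fun k _ ↦ ?_
    rw [hpow, mul_comm, mul_assoc]
  have hgeom : ‖expSum (Icc 1 n) θ‖ * ‖z - 1‖ = ‖z ^ n - 1‖ := by
    rw [← norm_mul, hexp, geom_sum_Ico_mul z (by omega), pow_succ', pow_one, ← mul_sub_one,
      norm_mul, hz, Complex.norm_exp_I_mul_ofReal, one_mul]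
  rw [hpow, hz, Complex.norm_exp_I_mul_ofReal_sub_one, Complex.norm_exp_I_mul_ofReal_sub_one,
    mul_div_cancel_left₀ _ two_ne_zero, mul_div_cancel_left₀ _ two_ne_zero, norm_mul, norm_mul,
    mul_left_comm] at hgeom
  exact mul_left_cancel₀ (norm_ne_zero_iff.2 two_ne_zero) hgeom

lemma norm_expSum_Icc_one_le_mul_exp {n : ℕ} {θ : ℝ} (hn : 1 ≤ n) (h0 : 0 < θ) (hπ : θ < π)
    (hnθ : n * θ ≤ π) :
    ‖expSum (Icc 1 n) θ‖ ≤ n * exp (-((n ^ 2 - 1) * θ ^ 2 / 6)) := by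
  have hsin : 0 < sin θ := sin_pos_of_pos_of_lt_pi h0 hπ
  have hkernel := norm_expSum_Icc_one_mul_abs_sin n θ
  rw [abs_of_pos hsin, abs_of_nonneg (sin_nonneg_of_nonneg_of_le_pi (by positivity) hnθ)]
    at hkernel
  refine le_of_mul_le_mul_right ?_ hsin
  rw [hkernel, mul_right_comm]
  exact sin_mul_le_mul_sin_mul_exp (by exact_mod_cast hn) h0.le hnθ

lemma norm_expSum_Icc_one_le_inv_sin (n : ℕ) {θ : ℝ} (hsin : 0 < sin θ) :
    ‖expSum (Icc 1 n) θ‖ ≤ (sin θ)⁻¹ := by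
  rw [← one_div, le_div_iff₀ hsin, ← abs_of_pos hsin, norm_expSum_Icc_one_mul_abs_sin]
  exact abs_sin_le_one _

lemma integral_norm_expSum_pow_zero_pi_div_le {n d : ℕ} (hn : 2 ≤ n) (hd : 0 < d) :
    ∫ θ in 0..π / n, ‖expSum (Icc 1 n) θ‖ ^ d ≤
      n ^ d * (√(π / (d * (n ^ 2 - 1) / 6)) / 2) := by
  have hn2 : (2 : ℝ) ≤ n := by exact_mod_cast hn
  have hn0 : (0 : ℝ) < n := by linarith
  have hb : (0 : ℝ) < d * (n ^ 2 - 1) / 6 := by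
    have : (0 : ℝ) < n ^ 2 - 1 := by nlinarith
    positivity
  have hpointwise : ∀ θ ∈ Set.Ioo 0 (π / n),
      ‖expSum (Icc 1 n) θ‖ ^ d ≤ n ^ d * exp (-(d * (n ^ 2 - 1) / 6) * θ ^ 2) := by
    rintro θ ⟨h0, hθ⟩
    rw [lt_div_iff₀' hn0] at hθ
    have hnorm := norm_expSum_Icc_one_le_mul_exp (by omega : 1 ≤ n) h0 (by nlinarith) hθ.le
    calc ‖expSum (Icc 1 n) θ‖ ^ d
        ≤ (n * exp (-((n ^ 2 - 1) * θ ^ 2 / 6))) ^ d :=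
          pow_le_pow_left₀ (norm_nonneg _) hnorm d
      _ = n ^ d * exp (-(d * (n ^ 2 - 1) / 6) * θ ^ 2) := by
          rw [mul_pow, ← exp_nat_mul]
          ring_nf
  calc ∫ θ in 0..π / n, ‖expSum (Icc 1 n) θ‖ ^ d
      ≤ ∫ θ in 0..π / n, n ^ d * exp (-(d * (n ^ 2 - 1) / 6) * θ ^ 2) :=
        intervalIntegral.integral_mono_on_of_le_Ioo (by positivity)
          (Continuous.intervalIntegrable (by fun_prop) _ _)
          (Continuous.intervalIntegrable (by fun_prop) _ _) hpointwise
    _ ≤ n ^ d * (√(π / (d * (n ^ 2 - 1) / 6)) / 2) := by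
        rw [intervalIntegral.integral_const_mul]
        gcongr
        exact integral_exp_neg_mul_sq_le (by positivity) hb

lemma integral_norm_expSum_pow_pi_div_pi_div_two_le {n : ℕ} (hn : 2 ≤ n) (k : ℕ) :
    ∫ θ in π / n..π / 2, ‖expSum (Icc 1 n) θ‖ ^ (k + 4) ≤
      (n / 2 : ℝ) ^ k * (n / π + n ^ 3 / (3 * π ^ 3)) := by
  have hn2 : (2 : ℝ) ≤ n := by exact_mod_cast hn
  have ha : 0 < π / n := by positivity
  have hab : π / n ≤ π / 2 := by gcongr
  have hsin : ∀ θ ∈ Set.Icc (π / n) (π / 2), 0 < sin θ := fun θ hθ ↦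
    sin_pos_of_pos_of_lt_pi (ha.trans_le hθ.1) (by linarith [hθ.2, pi_pos])
  have hpointwise : ∀ θ ∈ Set.Icc (π / n) (π / 2),
      ‖expSum (Icc 1 n) θ‖ ^ (k + 4) ≤ (n / 2 : ℝ) ^ k * (sin θ)⁻¹ ^ 4 := fun θ hθ ↦ by
    have hnorm := norm_expSum_Icc_one_le_inv_sin n (hsin θ hθ)
    have hhalf := inv_sin_le_half_of_pi_div_le (by linarith) hθ.1 hθ.2
    rw [pow_add]
    gcongr
    exact hnorm.trans hhalf
  have hcont : ContinuousOn (fun θ ↦ (n / 2 : ℝ) ^ k * (sin θ)⁻¹ ^ 4) (Set.Icc (π / n) (π / 2)) :=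
    .mul (by fun_prop) ((continuousOn_sin.inv₀ fun θ hθ ↦ (hsin θ hθ).ne').pow 4)
  have hcot : cot (π / n) ≤ n / π := by
    simpa using cot_le_inv ha (by linarith [pi_pos])
  have hcot0 : 0 ≤ cot (π / n) := by
    rw [cot_eq_cos_div_sin]
    exact div_nonneg (cos_nonneg_of_mem_Icc ⟨by linarith, hab⟩) (hsin _ ⟨le_rfl, hab⟩).le
  calc ∫ θ in π / n..π / 2, ‖expSum (Icc 1 n) θ‖ ^ (k + 4)
      ≤ ∫ θ in π / n..π / 2, (n / 2 : ℝ) ^ k * (sin θ)⁻¹ ^ 4 :=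
        intervalIntegral.integral_mono_on hab (Continuous.intervalIntegrable (by fun_prop) _ _)
          (hcont.intervalIntegrable_of_Icc hab) hpointwise
    _ = (n / 2 : ℝ) ^ k * (cot (π / n) + cot (π / n) ^ 3 / 3) := by
        rw [intervalIntegral.integral_const_mul, integral_inv_sin_pow_four ha hab]
    _ ≤ (n / 2 : ℝ) ^ k * (n / π + (n / π) ^ 3 / 3) := by gcongr
    _ = (n / 2 : ℝ) ^ k * (n / π + n ^ 3 / (3 * π ^ 3)) := by ring

lemma pi_mul_card_hyperplaneSection_Icc_one_le {n : ℕ} (hn : 2 ≤ n) (k : ℕ) (t : ℤ) :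
    π * #(hyperplaneSection (Icc 1 n) (k + 4) t) ≤
      n ^ (k + 4) * √(π / ((k + 4) * (n ^ 2 - 1) / 6)) +
        2 * ((n / 2 : ℝ) ^ k * (n / π + n ^ 3 / (3 * π ^ 3))) := by
  have hnear := integral_norm_expSum_pow_zero_pi_div_le hn (by omega : 0 < k + 4)
  have hfar := integral_norm_expSum_pow_pi_div_pi_div_two_le hn k
  have hsplit := intervalIntegral.integral_add_adjacent_intervals (μ := MeasureTheory.volume)
    (f := fun θ ↦ ‖expSum (Icc 1 n) θ‖ ^ (k + 4)) (a := 0) (b := π / n) (c := π / 2)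
    (Continuous.intervalIntegrable (by fun_prop) _ _)
    (Continuous.intervalIntegrable (by fun_prop) _ _)
  have hcard := pi_mul_card_hyperplaneSection_le (Icc 1 n) (k + 4) t
  push_cast at hnear
  linarith

lemma sqrt_pi_div_le_sqrt_two_div_mul {x D : ℝ} (hx : 2 ≤ x) (hD : 0 < D) :
    √(π / (D * (x ^ 2 - 1) / 6)) ≤ √(2 / D) * (49 / 50 * π * (x + 1) / x ^ 2) := by
  have hx1 : 0 < x ^ 2 - 1 := by nlinarith
  -- This is where the constant comes from: `√(3 / π) ≤ 49 / 50`.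
  have hpi : 3 ≤ (49 / 50) ^ 2 * π := by linarith [pi_gt_d2]
  have hpoly : x ^ 4 ≤ (x + 1) ^ 2 * (x ^ 2 - 1) := by nlinarith
  have hsq : 3 * π / (x ^ 2 - 1) ≤ (49 / 50 * π * (x + 1) / x ^ 2) ^ 2 := by
    rw [div_pow, div_le_div_iff₀ hx1 (by positivity)]
    calc 3 * π * (x ^ 2) ^ 2 = 3 * (π * x ^ 4) := by ring
      _ ≤ (49 / 50) ^ 2 * π * (π * ((x + 1) ^ 2 * (x ^ 2 - 1))) := by gcongr
      _ = (49 / 50 * π * (x + 1)) ^ 2 * (x ^ 2 - 1) := by ring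
  calc √(π / (D * (x ^ 2 - 1) / 6)) = √(2 / D * (3 * π / (x ^ 2 - 1))) := by
        congr 1
        field_simp
        norm_num
    _ = √(2 / D) * √(3 * π / (x ^ 2 - 1)) := sqrt_mul (by positivity) _
    _ ≤ √(2 / D) * (49 / 50 * π * (x + 1) / x ^ 2) := by
        gcongr
        exact sqrt_le_iff.2 ⟨by positivity, hsq⟩

lemma half_pow_le_mul_sqrt (k : ℕ) : (1 / 2 : ℝ) ^ k ≤ 3 / 2 * √(2 / (k + 4)) := by
  have hbernoulli : 1 + (k : ℝ) * 3 ≤ 4 ^ k := by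
    simpa [show (1 : ℝ) + 3 = 4 by norm_num] using
      one_add_mul_le_pow (show (-2 : ℝ) ≤ 3 by norm_num) k
  have hsq : (2 / 3 * (1 / 2 : ℝ) ^ k) ^ 2 ≤ 2 / (k + 4) := by
    calc (2 / 3 * (1 / 2 : ℝ) ^ k) ^ 2 = 4 / 9 * (1 / 4) ^ k := by
          rw [mul_pow, pow_right_comm]
          norm_num
      _ ≤ 2 / (k + 4) := by
          rw [one_div_pow, mul_one_div, div_le_div_iff₀ (by positivity) (by positivity)]
          linarith
  linarith [le_sqrt_of_sq_le hsq]

lemma cubic_add_le_pi_mul_add_two_pow_three {x : ℝ} (hx : 0 ≤ x) :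
    49 / 50 * π * (x ^ 3 + x ^ 2) + (x + x ^ 3 / 27) ≤ π * (x + 2) ^ 3 := by
  calc 49 / 50 * π * (x ^ 3 + x ^ 2) + (x + x ^ 3 / 27)
      ≤ 49 / 50 * π * (x ^ 3 + x ^ 2) + 3 * (x ^ 3 / 50 + 251 / 50 * x ^ 2 + 12 * x + 8) := by
        linarith [pow_nonneg hx 3, sq_nonneg x]
    _ ≤ 49 / 50 * π * (x ^ 3 + x ^ 2) + π * (x ^ 3 / 50 + 251 / 50 * x ^ 2 + 12 * x + 8) := by
        gcongr
        exact pi_gt_three.le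
    _ = π * (x + 2) ^ 3 := by ring

lemma pow_mul_add_two_pow_three_le {x : ℝ} (hx : 0 ≤ x) (k : ℕ) :
    x ^ k * (x + 2) ^ 3 ≤ (x + k + 2) ^ (k + 3) := by
  rw [pow_add (x + k + 2)]
  gcongr <;> linarith [(Nat.cast_nonneg k : (0 : ℝ) ≤ k)]

lemma one_le_pow_self_mul_sqrt {m : ℕ} (hm : 1 ≤ m) : 1 ≤ (m : ℝ) ^ m * √(2 / (m + 1)) := by
  have hm1 : (1 : ℝ) ≤ m := by exact_mod_cast hm
  have hsqrt : (m : ℝ)⁻¹ ≤ √(2 / (m + 1)) := by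
    refine le_sqrt_of_sq_le ?_
    rw [inv_pow, inv_eq_one_div, div_le_div_iff₀ (by positivity) (by positivity)]
    nlinarith
  calc 1 = (m : ℝ) * (m : ℝ)⁻¹ := (mul_inv_cancel₀ (by positivity)).symm
    _ ≤ (m : ℝ) ^ m * √(2 / (m + 1)) := by
        gcongr
        exact le_self_pow₀ hm1 (by omega)

lemma card_hyperplaneSection_Icc_one_le {n : ℕ} (hn : 2 ≤ n) (k : ℕ) (t : ℤ) :
    (#(hyperplaneSection (Icc 1 n) (k + 4) t) : ℝ) ≤
      (n + k + 2) ^ (k + 3) * √(2 / (k + 4)) := by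
  have hcard := pi_mul_card_hyperplaneSection_Icc_one_le hn k t
  have hn2 : (2 : ℝ) ≤ n := by exact_mod_cast hn
  set x := (n : ℝ)
  set c : ℝ := √(2 / (k + 4))
  have hnear : x ^ (k + 4) * √(π / ((k + 4) * (x ^ 2 - 1) / 6)) ≤
      c * x ^ k * (49 / 50 * π * (x ^ 3 + x ^ 2)) := by
    calc x ^ (k + 4) * √(π / ((k + 4) * (x ^ 2 - 1) / 6))
        ≤ x ^ (k + 4) * (c * (49 / 50 * π * (x + 1) / x ^ 2)) := by
          gcongr
          exact sqrt_pi_div_le_sqrt_two_div_mul hn2 (by positivity)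
      _ = c * x ^ k * (49 / 50 * π * (x ^ 3 + x ^ 2)) := by
          field_simp
          ring
  have hfar : (x / 2) ^ k * (x / π + x ^ 3 / (3 * π ^ 3)) ≤
      c * x ^ k * (3 / 2 * (x / 3 + x ^ 3 / 81)) := by
    calc (x / 2) ^ k * (x / π + x ^ 3 / (3 * π ^ 3))
        = x ^ k * (1 / 2) ^ k * (x / π + x ^ 3 / (3 * π ^ 3)) := by
          rw [← mul_pow, mul_one_div]
      _ ≤ x ^ k * (3 / 2 * c) * (x / 3 + x ^ 3 / (3 * 3 ^ 3)) := by
          gcongr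
          exacts [half_pow_le_mul_sqrt k, pi_gt_three.le, pi_gt_three.le]
      _ = c * x ^ k * (3 / 2 * (x / 3 + x ^ 3 / 81)) := by ring
  refine le_of_mul_le_mul_left ?_ pi_pos
  calc π * #(hyperplaneSection (Icc 1 n) (k + 4) t)
      ≤ c * x ^ k * (49 / 50 * π * (x ^ 3 + x ^ 2) + (x + x ^ 3 / 27)) := by linarith
    _ ≤ c * x ^ k * (π * (x + 2) ^ 3) := by
        gcongr
        exact cubic_add_le_pi_mul_add_two_pow_three (by linarith)
    _ = π * (x ^ k * (x + 2) ^ 3 * c) := by ring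
    _ ≤ π * ((x + k + 2) ^ (k + 3) * c) := by
        gcongr
        exact pow_mul_add_two_pow_three_le (by linarith) k

lemma card_hyperplaneSection_Icc_one_three_le (n : ℕ) (t : ℤ) :
    (#(hyperplaneSection (Icc 1 n) 3 t) : ℝ) ≤ (n + 1) ^ 2 * √(2 / 3) := by
  have hcard : 4 * (#(hyperplaneSection (Icc 1 n) 3 t) : ℝ) ≤ 3 * n ^ 2 + 1 := by
    exact_mod_cast four_mul_card_hyperplaneSection_Icc_three_le n t
  have hsqrt : (4 / 5 : ℝ) ≤ √(2 / 3) := le_sqrt_of_sq_le (by norm_num)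
  calc (#(hyperplaneSection (Icc 1 n) 3 t) : ℝ) ≤ (n + 1) ^ 2 * (4 / 5) := by
        nlinarith [(Nat.cast_nonneg n : (0 : ℝ) ≤ n)]
    _ ≤ (n + 1) ^ 2 * √(2 / 3) := by gcongr

lemma card_hyperplaneSection_Icc_one_one_le {m : ℕ} (hm : 1 ≤ m) (t : ℤ) :
    (#(hyperplaneSection (Icc 1 1) (m + 1) t) : ℝ) ≤ m ^ m * √(2 / (m + 1)) := by
  have hcard : #(hyperplaneSection (Icc 1 1) (m + 1) t) ≤ 1 := by
    simpa using card_hyperplaneSection_succ_le (Icc 1 1) m t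
  exact (Nat.cast_le_one.2 hcard).trans (one_le_pow_self_mul_sqrt hm)

/-- The number of lattice points of `{1, …, n}^d` lying on the hyperplane
`x₁ + ⋯ + x_d = t` is at most `(n + d - 2)^(d-1) · √(2/d)`. -/
theorem cube_hyperplane_section_bound (n d : ℕ) (hn : 1 ≤ n) (hd : 1 ≤ d) (t : ℤ) :
    (((Fintype.piFinset (fun _ : Fin d => Finset.Icc 1 n)).filter
        (fun x : Fin d → ℕ => (∑ i, (x i : ℤ)) = t)).card : ℝ)
      ≤ ((n : ℝ) + d - 2) ^ (d - 1) * Real.sqrt (2 / d) := by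
  change (#(hyperplaneSection (Icc 1 n) d t) : ℝ) ≤ _
  match d, hd with
  | 1, _ =>
    have hcard : #(hyperplaneSection (Icc 1 n) 1 t) ≤ 1 := card_hyperplaneSection_succ_le _ 0 t
    calc (#(hyperplaneSection (Icc 1 n) 1 t) : ℝ) ≤ 1 := by exact_mod_cast hcard
      _ ≤ _ := by simp [one_le_sqrt]
  | 2, _ =>
    have hcard := card_hyperplaneSection_succ_le (Icc 1 n) 1 t
    simpa using hcard
  | 3, _ =>
    convert card_hyperplaneSection_Icc_one_three_le n t using 3 <;> push_cast <;> ring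
  | k + 4, _ =>
    obtain rfl | hn := hn.eq_or_lt
    · convert card_hyperplaneSection_Icc_one_one_le (by omega : 1 ≤ k + 3) t using 3 <;>
        push_cast <;> ring
    · convert card_hyperplaneSection_Icc_one_le hn k t using 3 <;> push_cast <;> ring
end

section
/- Let d ≥ 1 and let X be a set of n ≥ d positive integers. Order the d-element subsets of X by: B ≤ C if and only if, writing B = {b_1 < b_2 < ... < b_d} and C = {c_1 < c_2 < ... < c_d} in increasing order, b_i ≤ c_i for all 1 ≤ i ≤ d. Then every antichain U in this partial order satisfies |U| ≤ (1/d!)·(n+d-2)^{d-1}·√(2/d). -/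
/-- The `i`-th smallest element of a finset of naturals (0-indexed; junk value `0` if
`i` is out of range). -/
def kthSmallest (B : Finset ℕ) (i : ℕ) : ℕ :=
  (B.sort (· ≤ ·)).getD i 0

/-- The partial order on `d`-element subsets: `B ≤ C` iff for each `i < d`, the `i`-th
smallest element of `B` is at most the `i`-th smallest element of `C`. -/
def SubsetLE (d : ℕ) (B C : Finset ℕ) : Prop :=
  ∀ i < d, kthSmallest B i ≤ kthSmallest C i

/-!
For each `B ∈ U`, identify `X` with `[n] = {0, …, n - 1}` and consider the `d!` rearrangements of
the increasing enumeration of `B`. Since sorting is monotone for the product order, all of these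
vectors together form an antichain of size `d! |U|` in the grid `[n]^d`. The grid has a symmetric
chain decomposition, so an antichain is at most as large as the middle layer `∑ xᵢ = ⌊d(n-1)/2⌋`.

The size of a layer is a Fourier coefficient of the `d`-th power of `∑_{j < n} e^{2ijt}`, hence is
at most `π⁻¹ ∫₀^π |sin nt / sin t|^d dt`. The integral is estimated in the spirit of Ball's cube
slicing inequality. For `d ≥ 6`, comparing the Euler products of `sin nt` and `sin t` bounds the
main lobe `[0, π/n]` by a Gaussian with integral close to the target, and the remaining lobes are
negligible. For `d = 2` and `d = 4` the integral is known exactly by Parseval, and `d = 3` and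
`d = 5` follow from their neighbours by log-convexity of the moments.
-/

open Finset Real

section SymmetricChains

variable {α β : Type*}

/-- A symmetric chain decomposition of an ordered type `α` with rank function `ρ` running from `0`
to `N`, encoded by the map `bot` which sends an element to the minimum of its chain: the chains are
the fibres of `bot`, and the chain with minimum `b` meets exactly the ranks from `ρ b` to
`N - ρ b`. -/
structure IsSymmetricChainDecomposition [LE α] (ρ : α → ℕ) (N : ℕ) (bot : α → α) : Prop where
  bot_bot (x : α) : bot (bot x) = bot x
  le_of_rank_le {x y : α} : bot x = bot y → ρ x ≤ ρ y → x ≤ y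
  rank_bot_le (x : α) : ρ (bot x) ≤ ρ x
  rank_add_rank_bot_le (x : α) : ρ x + ρ (bot x) ≤ N
  exists_rank_eq (x : α) {r : ℕ} : ρ (bot x) ≤ r → r + ρ (bot x) ≤ N →
    ∃ y, bot y = bot x ∧ ρ y = r

namespace IsSymmetricChainDecomposition

theorem of_unique [Preorder α] [Unique α] :
    IsSymmetricChainDecomposition (fun _ : α ↦ 0) 0 id where
  bot_bot _ := rfl
  le_of_rank_le h _ := h.le
  rank_bot_le _ := le_rfl
  rank_add_rank_bot_le _ := le_rfl
  exists_rank_eq x _ _ hr := ⟨x, rfl, by omega⟩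

theorem comp_orderIso [LE α] [LE β] {ρ : α → ℕ} {N : ℕ} {bot : α → α}
    (h : IsSymmetricChainDecomposition ρ N bot) (e : β ≃o α) :
    IsSymmetricChainDecomposition (ρ ∘ e) N (e.symm ∘ bot ∘ e) where
  bot_bot x := by simp [h.bot_bot]
  le_of_rank_le hbot hρ :=
    e.le_iff_le.1 (h.le_of_rank_le (e.symm.injective hbot) hρ)
  rank_bot_le x := by simpa using h.rank_bot_le (e x)
  rank_add_rank_bot_le x := by simpa using h.rank_add_rank_bot_le (e x)
  exists_rank_eq x r hr hrN := by
    obtain ⟨y, hy, rfl⟩ := h.exists_rank_eq (e x) (r := r) (by simpa using hr) (by simpa using hrN)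
    exact ⟨e.symm y, by simp [hy], by simp⟩

-- The product of two chains is a rectangular grid, which is partitioned into hooks: the `j`-th hook
-- first climbs the second chain with first coordinate `j`, and then climbs the first chain with
-- second coordinate `j` places below the top.
theorem fin_prod [Preorder α] {ρ : α → ℕ} {N : ℕ} {bot : α → α}
    (h : IsSymmetricChainDecomposition ρ N bot) (n : ℕ) :
    IsSymmetricChainDecomposition (fun p : Fin n × α ↦ p.1 + ρ p.2) (n - 1 + N)
      (fun p ↦ (⟨min p.1 (N - ρ (bot p.2) - ρ p.2), by omega⟩, bot p.2)) where
  bot_bot p := by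
    have hle := h.rank_bot_le p.2
    simp only [h.bot_bot, Prod.mk.injEq, Fin.mk.injEq, and_true]
    omega
  le_of_rank_le {p q} hbot hρ := by
    simp only [Prod.mk.injEq, Fin.mk.injEq] at hbot
    obtain ⟨hmin, hbot⟩ := hbot
    have hp := h.rank_add_rank_bot_le p.2
    have hq := h.rank_add_rank_bot_le q.2
    rw [hbot] at hmin hp
    obtain ⟨h₁, h₂⟩ : p.1.val ≤ q.1 ∧ ρ p.2 ≤ ρ q.2 := by omega
    exact ⟨h₁, h.le_of_rank_le hbot h₂⟩
  rank_bot_le p := by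
    have := h.rank_bot_le p.2
    simp only
    omega
  rank_add_rank_bot_le p := by
    have := h.rank_bot_le p.2
    have := h.rank_add_rank_bot_le p.2
    simp only
    omega
  exists_rank_eq p r hr hrN := by
    have hle := h.rank_bot_le p.2
    have hN := h.rank_add_rank_bot_le p.2
    simp only at hr hrN
    set l := ρ (bot p.2)
    obtain ⟨j, hj⟩ : ∃ j, min p.1.val (N - l - ρ p.2) = j := ⟨_, rfl⟩
    rw [hj] at hr hrN
    obtain ⟨i, s, hi, hls, hsN, hr, hmin⟩ : ∃ i s, i < n ∧ l ≤ s ∧ s + l ≤ N ∧ i + s = r ∧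
        min i (N - l - s) = j := by
      by_cases hrj : r ≤ N - l
      · exact ⟨j, r - j, by omega⟩
      · exact ⟨r - (N - l - j), N - l - j, by omega⟩
    obtain ⟨y, hy, rfl⟩ := h.exists_rank_eq p.2 hls hsN
    refine ⟨(⟨i, hi⟩, y), ?_, hr⟩
    simp only [hy, Prod.mk.injEq, Fin.mk.injEq, and_true]
    omega

theorem card_le_card_middle_rank [PartialOrder α] [Fintype α] {ρ : α → ℕ} {N : ℕ} {bot : α → α}
    (h : IsSymmetricChainDecomposition ρ N bot) {A : Finset α}
    (hA : IsAntichain (· ≤ ·) (A : Set α)) : #A ≤ #{x | ρ x = N / 2} := by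
  have exists_middle (x : α) : ∃ y, bot y = bot x ∧ ρ y = N / 2 := by
    have := h.rank_bot_le x
    have := h.rank_add_rank_bot_le x
    exact h.exists_rank_eq x (by omega) (by omega)
  choose mid bot_mid rank_mid using exists_middle
  refine card_le_card_of_injOn mid (by simp [Set.MapsTo, rank_mid]) fun x hx y hy hxy ↦ ?_
  have hbot : bot x = bot y := by rw [← bot_mid x, hxy, bot_mid]
  rcases le_total (ρ x) (ρ y) with hle | hle
  · exact hA.eq hx hy (h.le_of_rank_le hbot hle)
  · exact hA.eq' hx hy (h.le_of_rank_le hbot.symm hle)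

end IsSymmetricChainDecomposition

theorem exists_isSymmetricChainDecomposition_pi_fin (n d : ℕ) : ∃ bot,
    IsSymmetricChainDecomposition (fun x : Fin d → Fin n ↦ ∑ i, (x i : ℕ)) (d * (n - 1)) bot := by
  induction d with
  | zero => exact ⟨id, by simpa using IsSymmetricChainDecomposition.of_unique⟩
  | succ d ih =>
    obtain ⟨bot, h⟩ := ih
    have h' := (h.fin_prod n).comp_orderIso (Fin.consOrderIso fun _ ↦ Fin n).symm
    have hrank : (fun x : Fin (d + 1) → Fin n ↦ ∑ i, (x i : ℕ)) =
        (fun p : Fin n × (Fin d → Fin n) ↦ p.1 + ∑ i, (p.2 i : ℕ)) ∘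
          (Fin.consOrderIso fun _ ↦ Fin n).symm := funext fun _ ↦ Fin.sum_univ_succ _
    have htop : (d + 1) * (n - 1) = n - 1 + d * (n - 1) := by ring
    rw [hrank, htop]
    exact ⟨_, h'⟩

end SymmetricChains

section Permutations

variable {ι α β : Type*} [LinearOrder ι] [LocallyFiniteOrderBot ι]

theorem exists_le_and_le_perm_apply (σ : Equiv.Perm ι) (i : ι) : ∃ j ≤ i, i ≤ σ j := by
  by_contra! h
  have hle : #(Iic i) ≤ #(Iio i) :=
    card_le_card_of_injOn σ (fun j hj ↦ by simpa using h j (by simpa using hj)) σ.injective.injOn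
  have hss : Iio i ⊂ Iic i := (ssubset_iff_of_subset Iio_subset_Iic_self).2 ⟨i, by simp⟩
  exact hle.not_gt (card_lt_card hss)

theorem le_of_comp_perm_le_comp_perm [Preorder α] {b c : ι → α} (hb : Monotone b) (hc : Monotone c)
    {σ τ : Equiv.Perm ι} (h : b ∘ σ ≤ c ∘ τ) : b ≤ c := by
  intro i
  obtain ⟨j, hji, hij⟩ := exists_le_and_le_perm_apply (σ * τ⁻¹) i
  calc b i ≤ b (σ (τ⁻¹ j)) := hb hij
    _ ≤ c (τ (τ⁻¹ j)) := h _
    _ = c j := by simp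
    _ ≤ c i := hc hji

theorem perm_eq_of_le {σ τ : Equiv.Perm ι} (h : ⇑σ ≤ τ) : σ = τ := by
  suffices σ * τ⁻¹ = 1 by rwa [mul_inv_eq_one] at this
  have hle (j : ι) : (σ * τ⁻¹) j ≤ j := by simpa using h (τ⁻¹ j)
  ext i
  obtain ⟨j, hji, hij⟩ := exists_le_and_le_perm_apply (σ * τ⁻¹) i
  obtain rfl : j = i := hji.antisymm (hij.trans (hle j))
  exact (hle j).antisymm hij

theorem eq_of_comp_perm_le_comp_perm [Preorder α] {f : β → ι ↪o α}
    (hf : ∀ a b, ⇑(f a) ≤ f b → a = b) {p q : β × Equiv.Perm ι}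
    (h : f p.1 ∘ p.2 ≤ f q.1 ∘ q.2) : p = q := by
  obtain ⟨a, σ⟩ := p
  obtain ⟨b, τ⟩ := q
  obtain rfl := hf a b (le_of_comp_perm_le_comp_perm (f a).monotone (f b).monotone h)
  have hστ : σ = τ := perm_eq_of_le fun i ↦ (f a).le_iff_le.1 (h i)
  rw [hστ]

end Permutations

theorem card_mul_factorial_le_card_middle_layer {ι : Type*} [Fintype ι] {n d : ℕ}
    (f : ι → Fin d ↪o Fin n) (hf : ∀ a b, ⇑(f a) ≤ f b → a = b) :
    Fintype.card ι * d.factorial ≤ #{x : Fin d → Fin n | ∑ i, (x i : ℕ) = d * (n - 1) / 2} := by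
  classical
  let F (p : ι × Equiv.Perm (Fin d)) : Fin d → Fin n := f p.1 ∘ p.2
  have hF {p q} (h : F p ≤ F q) : p = q := eq_of_comp_perm_le_comp_perm hf h
  have hcard : #(univ.image F) = Fintype.card ι * d.factorial := by
    rw [card_image_of_injective _ fun p q h ↦ hF h.le]
    simp [Fintype.card_perm]
  have hanti : IsAntichain (· ≤ ·) (univ.image F : Set (Fin d → Fin n)) := by
    simp only [coe_image, coe_univ, Set.image_univ]
    rintro _ ⟨p, rfl⟩ _ ⟨q, rfl⟩ hne hle
    exact hne (by rw [hF hle])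
  obtain ⟨bot, hbot⟩ := exists_isSymmetricChainDecomposition_pi_fin n d
  exact hcard ▸ hbot.card_le_card_middle_rank hanti

section ExponentialSums

open Complex

variable {ι : Type*}

theorem integral_exp_two_mul_int_mul_I_s9 (k : ℤ) :
    ∫ t in (0 : ℝ)..π, cexp (2 * k * I * t) = if k = 0 then (π : ℂ) else 0 := by
  split_ifs with hk
  · simp [hk]
  · have hc : (2 * k * I : ℂ) ≠ 0 := by simp [hk]
    have hperiod : (2 * k * I * π : ℂ) = k * (2 * π * I) := by ring
    rw [integral_exp_mul_complex hc, hperiod, exp_int_mul_two_pi_mul_I]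
    simp

theorem integral_sum_exp_two_mul_int_mul_I_s9 (S : Finset ι) (w : ι → ℤ) :
    ∫ t in (0 : ℝ)..π, ∑ i ∈ S, cexp (2 * w i * I * t) = π * (#{i ∈ S | w i = 0} : ℂ) := by
  rw [intervalIntegral.integral_finsetSum
    fun i _ ↦ Continuous.intervalIntegrable (by fun_prop) _ _]
  simp_rw [integral_exp_two_mul_int_mul_I_s9]
  rw [← sum_filter, sum_const, nsmul_eq_mul, mul_comm]

theorem card_filter_apply_eq_apply_eq_sum_sq {κ : Type*} [DecidableEq κ] {S : Finset ι}
    {T : Finset κ} {w : ι → κ} (hw : Set.MapsTo w S T) :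
    #{p ∈ S ×ˢ S | w p.1 = w p.2} = ∑ k ∈ T, #{i ∈ S | w i = k} ^ 2 := by
  rw [card_eq_sum_card_fiberwise (f := fun p ↦ w p.1) (t := T)
    fun p hp ↦ hw (mem_product.1 (mem_filter.1 hp).1).1]
  refine sum_congr rfl fun k _ ↦ ?_
  rw [sq, ← card_product]
  congr 1
  ext p
  simp only [mem_filter, mem_product]
  grind

theorem ofReal_norm_sq_sum_exp (S : Finset ι) (w : ι → ℕ) (t : ℝ) :
    ((‖∑ i ∈ S, cexp (2 * w i * I * t)‖ ^ 2 : ℝ) : ℂ) =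
      ∑ p ∈ S ×ˢ S, cexp (2 * ((w p.1 - w p.2 : ℤ) : ℂ) * I * t) := by
  rw [ofReal_pow, ← mul_conj', map_sum, sum_mul_sum, ← sum_product']
  refine sum_congr rfl fun p _ ↦ ?_
  rw [← exp_conj, ← Complex.exp_add]
  congr 1
  simp [conj_ofNat]
  ring

theorem integral_norm_sq_sum_exp {S : Finset ι} {T : Finset ℕ} {w : ι → ℕ}
    (hw : Set.MapsTo w S T) :
    ∫ t in (0 : ℝ)..π, ‖∑ i ∈ S, cexp (2 * w i * I * t)‖ ^ 2 =
      π * ∑ k ∈ T, (#{i ∈ S | w i = k} : ℝ) ^ 2 := by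
  have h := integral_sum_exp_two_mul_int_mul_I_s9 (S ×ˢ S) fun p ↦ (w p.1 - w p.2 : ℤ)
  simp_rw [← ofReal_norm_sq_sum_exp, sub_eq_zero, Nat.cast_inj,
    card_filter_apply_eq_apply_eq_sum_sq hw] at h
  rw [intervalIntegral.integral_ofReal] at h
  exact_mod_cast h

/-- The exponential sum `∑_{j < n} e^{2ijt}`, which is the Dirichlet kernel up to a unimodular
factor. The variable is half the usual angle, so that its modulus is `|sin (n t) / sin t|`. -/
noncomputable def dirichletSum (n : ℕ) (t : ℝ) : ℂ :=
  ∑ j ∈ range n, cexp (2 * j * I * t)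

@[fun_prop]
theorem continuous_dirichletSum (n : ℕ) : Continuous (dirichletSum n) := by
  unfold dirichletSum
  fun_prop

theorem dirichletSum_pow (n d : ℕ) (t : ℝ) :
    dirichletSum n t ^ d = ∑ x : Fin d → Fin n, cexp (2 * (∑ i, (x i : ℕ) : ℕ) * I * t) := by
  rw [dirichletSum, sum_range fun j ↦ cexp (2 * j * I * t), Fintype.sum_pow]
  refine sum_congr rfl fun x _ ↦ ?_
  rw [← Complex.exp_sum]
  push_cast
  simp_rw [mul_sum, sum_mul]

theorem norm_dirichletSum_mul_abs_sin (n : ℕ) (t : ℝ) :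
    ‖dirichletSum n t‖ * |Real.sin t| = |Real.sin (n * t)| := by
  have hgeom : dirichletSum n t * (cexp (I * (2 * t : ℝ)) - 1) =
      cexp (I * (2 * (n * t) : ℝ)) - 1 := by
    have hpow (j : ℕ) : cexp (2 * j * I * t) = cexp (I * (2 * t : ℝ)) ^ j := by
      rw [← Complex.exp_nat_mul]
      congr 1
      push_cast
      ring
    simp_rw [dirichletSum, hpow]
    rw [geom_sum_mul, ← hpow]
    congr 2
    push_cast
    ring
  have hnorm := congrArg norm hgeom
  simp only [norm_mul, norm_exp_I_mul_ofReal_sub_one, mul_div_cancel_left₀ _ (two_ne_zero' ℝ),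
    Real.norm_eq_abs, abs_two] at hnorm
  linarith

theorem norm_dirichletSum_le (n : ℕ) (t : ℝ) : ‖dirichletSum n t‖ ≤ n := by
  refine (norm_sum_le_of_le (range n) (f := fun j : ℕ ↦ cexp (2 * j * I * t)) (n := fun _ ↦ 1)
    fun j _ ↦ ?_).trans_eq (by simp)
  have harg : (2 * j * I * t : ℂ) = (2 * j * t : ℝ) * I := by push_cast; ring
  rw [harg, norm_exp_ofReal_mul_I]

theorem norm_dirichletSum_pi_sub (n : ℕ) (t : ℝ) :
    ‖dirichletSum n (π - t)‖ = ‖dirichletSum n t‖ := by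
  rw [← norm_conj (dirichletSum n t), dirichletSum, dirichletSum, map_sum]
  congr 1
  refine sum_congr rfl fun j _ ↦ ?_
  have harg : (2 * j * I * (π - t : ℝ) : ℂ) =
      (starRingEnd ℂ) (2 * j * I * t) + j * (2 * π * I) := by
    simp [conj_ofNat]
    ring
  rw [← exp_conj, harg, Complex.exp_add, exp_nat_mul_two_pi_mul_I, mul_one]

end ExponentialSums

section Moments

/-- The `d`-th absolute moment of `dirichletSum n` over a period, with respect to Lebesgue
measure. Up to the factor `π`, it dominates the size of every layer of the grid `[n]^d`. -/
noncomputable def dirichletMoment (n d : ℕ) : ℝ :=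
  ∫ t in (0 : ℝ)..π, ‖dirichletSum n t‖ ^ d

theorem intervalIntegrable_norm_dirichletSum_pow (n d : ℕ) (a b : ℝ) :
    IntervalIntegrable (fun t ↦ ‖dirichletSum n t‖ ^ d) MeasureTheory.volume a b :=
  Continuous.intervalIntegrable (by fun_prop) a b

theorem dirichletMoment_nonneg (n d : ℕ) : 0 ≤ dirichletMoment n d :=
  intervalIntegral.integral_nonneg pi_pos.le fun _ _ ↦ by positivity

open Complex in
theorem pi_mul_card_layer_le_dirichletMoment (n d s : ℕ) :
    π * #{x : Fin d → Fin n | ∑ i, (x i : ℕ) = s} ≤ dirichletMoment n d := by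
  have hcoeff := integral_sum_exp_two_mul_int_mul_I_s9 (univ : Finset (Fin d → Fin n))
    fun x ↦ ((∑ i, (x i : ℕ) : ℕ) - s : ℤ)
  have hfactor (t : ℝ) : ∑ x : Fin d → Fin n,
      cexp (2 * (((∑ i, (x i : ℕ) : ℕ) - s : ℤ) : ℂ) * I * t) =
        dirichletSum n t ^ d * cexp ((-(2 * s * t) : ℝ) * I) := by
    rw [dirichletSum_pow, sum_mul]
    refine sum_congr rfl fun x _ ↦ ?_
    rw [← Complex.exp_add]
    congr 1
    push_cast
    ring
  simp_rw [hfactor, sub_eq_zero, Nat.cast_inj] at hcoeff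
  calc π * (#{x : Fin d → Fin n | ∑ i, (x i : ℕ) = s} : ℝ)
      = ‖∫ t in (0 : ℝ)..π, dirichletSum n t ^ d * cexp ((-(2 * s * t) : ℝ) * I)‖ := by
        rw [hcoeff, norm_mul, Complex.norm_real, Complex.norm_natCast,
          Real.norm_of_nonneg pi_pos.le]
    _ ≤ ∫ t in (0 : ℝ)..π, ‖dirichletSum n t ^ d * cexp ((-(2 * s * t) : ℝ) * I)‖ :=
        intervalIntegral.norm_integral_le_integral_norm pi_pos.le
    _ = dirichletMoment n d := by
        simp only [norm_mul, norm_pow, norm_exp_ofReal_mul_I, mul_one, dirichletMoment]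

theorem dirichletMoment_two (n : ℕ) : dirichletMoment n 2 = π * n := by
  have h := integral_norm_sq_sum_exp (S := range n) (T := range n) (w := id) fun _ hj ↦ hj
  have hfiber : ∀ k ∈ range n, (#{j ∈ range n | id j = k} : ℝ) ^ 2 = 1 := by
    intro k hk
    simp [filter_eq', mem_range.1 hk]
  rw [sum_congr rfl hfiber] at h
  simpa [dirichletMoment, dirichletSum] using h

theorem card_filter_add_eq_of_lt {n k : ℕ} (hk : k < n) :
    #{p ∈ range n ×ˢ range n | p.1 + p.2 = k} = k + 1 := by
  rw [← card_range (k + 1)]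
  refine card_nbij' Prod.fst (fun a ↦ (a, k - a)) ?_ ?_ ?_ ?_ <;>
    simp [Set.MapsTo, Set.LeftInvOn, Set.RightInvOn] <;> omega

theorem card_filter_add_eq_add (n k : ℕ) :
    #{p ∈ range n ×ˢ range n | p.1 + p.2 = n + k} = n - 1 - k := by
  have hcard : #(Ioo k n) = n - 1 - k := by simp; omega
  rw [← hcard]
  refine card_nbij' Prod.fst (fun a ↦ (a, n + k - a)) ?_ ?_ ?_ ?_ <;>
    simp [Set.MapsTo, Set.LeftInvOn, Set.RightInvOn] <;> omega

theorem three_mul_sum_range_succ_sq_add_sq (n : ℕ) :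
    3 * ∑ k ∈ range n, ((k + 1) ^ 2 + k ^ 2) = 2 * n ^ 3 + n := by
  induction n with
  | zero => simp
  | succ n ih =>
    rw [sum_range_succ, mul_add, ih]
    ring

theorem three_mul_sum_sq_card_filter_add_eq (n : ℕ) :
    3 * ∑ k ∈ range (n + n), #{p ∈ range n ×ˢ range n | p.1 + p.2 = k} ^ 2 = 2 * n ^ 3 + n := by
  have hlow : ∑ k ∈ range n, #{p ∈ range n ×ˢ range n | p.1 + p.2 = k} ^ 2 =
      ∑ k ∈ range n, (k + 1) ^ 2 :=
    sum_congr rfl fun k hk ↦ by rw [card_filter_add_eq_of_lt (mem_range.1 hk)]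
  simp_rw [sum_range_add, hlow, card_filter_add_eq_add]
  rw [sum_range_reflect (fun k ↦ k ^ 2), ← sum_add_distrib, three_mul_sum_range_succ_sq_add_sq]

theorem dirichletMoment_four (n : ℕ) : dirichletMoment n 4 = π * ((2 * n ^ 3 + n) / 3) := by
  have h := integral_norm_sq_sum_exp (S := range n ×ˢ range n) (T := range (n + n))
    (w := fun p ↦ p.1 + p.2) fun p hp ↦ by
      simp only [coe_product, coe_range, Set.mem_prod, Set.mem_Iio] at hp ⊢
      omega
  have hsq (t : ℝ) : ∑ p ∈ range n ×ˢ range n, Complex.exp (2 * (p.1 + p.2 : ℕ) * Complex.I * t) =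
      dirichletSum n t ^ 2 := by
    rw [sq, dirichletSum, sum_mul_sum, ← sum_product']
    refine sum_congr rfl fun p _ ↦ ?_
    rw [← Complex.exp_add]
    congr 1
    push_cast
    ring
  have hsum : 3 * ∑ k ∈ range (n + n), (#{p ∈ range n ×ˢ range n | p.1 + p.2 = k} : ℝ) ^ 2 =
      2 * n ^ 3 + n := by exact_mod_cast three_mul_sum_sq_card_filter_add_eq n
  simp_rw [hsq, norm_pow, ← pow_mul] at h
  rw [dirichletMoment, h]
  linear_combination π / 3 * hsum

theorem sq_integral_pow_succ_le {g : ℝ → ℝ} (hg : Continuous g) (hg0 : ∀ t, 0 ≤ g t) {a b : ℝ}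
    (hab : a ≤ b) (k : ℕ) :
    (∫ t in a..b, g t ^ (k + 1)) ^ 2 ≤ (∫ t in a..b, g t ^ k) * ∫ t in a..b, g t ^ (k + 2) := by
  have hint (c : ℝ) (j : ℕ) :
      IntervalIntegrable (fun t ↦ c * g t ^ j) MeasureTheory.volume a b :=
    Continuous.intervalIntegrable (by fun_prop) a b
  have hquad (x : ℝ) : 0 ≤ (∫ t in a..b, g t ^ (k + 2)) * (x * x) +
      (-2 * ∫ t in a..b, g t ^ (k + 1)) * x + ∫ t in a..b, g t ^ k := by
    calc (0 : ℝ) ≤ ∫ t in a..b, g t ^ k * (x * g t - 1) ^ 2 :=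
          intervalIntegral.integral_nonneg hab fun t _ ↦ by have := hg0 t; positivity
      _ = ∫ t in a..b, (x * x * g t ^ (k + 2) + -2 * x * g t ^ (k + 1) + 1 * g t ^ k) := by
          congr 1 with t
          ring
      _ = _ := by
          rw [intervalIntegral.integral_add ((hint _ _).add (hint _ _)) (hint _ _),
            intervalIntegral.integral_add (hint _ _) (hint _ _)]
          simp only [intervalIntegral.integral_const_mul]
          ring
  have hdiscrim := discrim_le_zero hquad
  rw [discrim] at hdiscrim
  linarith

theorem sq_dirichletMoment_succ_le (n k : ℕ) :
    dirichletMoment n (k + 1) ^ 2 ≤ dirichletMoment n k * dirichletMoment n (k + 2) :=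
  sq_integral_pow_succ_le (continuous_dirichletSum n).norm (fun _ ↦ norm_nonneg _) pi_pos.le k

theorem dirichletMoment_eq_two_mul_integral (n d : ℕ) :
    dirichletMoment n d = 2 * ∫ t in (0 : ℝ)..(π / 2), ‖dirichletSum n t‖ ^ d := by
  have hrefl := intervalIntegral.integral_comp_sub_left (a := 0) (b := π / 2)
    (fun t ↦ ‖dirichletSum n t‖ ^ d) π
  simp only [norm_dirichletSum_pi_sub, sub_zero, sub_half] at hrefl
  rw [dirichletMoment, ← intervalIntegral.integral_add_adjacent_intervals
    (intervalIntegrable_norm_dirichletSum_pow n d 0 (π / 2))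
    (intervalIntegrable_norm_dirichletSum_pow n d (π / 2) π), ← hrefl, two_mul]

end Moments

theorem one_sub_sq_mul_le {a u : ℝ} (ha : 1 ≤ a) (hu : u ≤ 1) :
    1 - a ^ 2 * u ≤ (1 - u) * exp (-(a ^ 2 - 1) * u) := by
  have hexp := mul_le_mul_of_nonneg_left (add_one_le_exp (-(a ^ 2 - 1) * u)) (sub_nonneg.2 hu)
  have hsq : 0 ≤ (a ^ 2 - 1) * u ^ 2 :=
    mul_nonneg (sub_nonneg.2 (one_le_pow₀ ha)) (sq_nonneg u)
  linarith

theorem hasSum_one_div_nat_add_one_sq :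
    HasSum (fun k : ℕ ↦ (1 : ℝ) / (k + 1) ^ 2) (π ^ 2 / 6) := by
  simpa using (hasSum_nat_add_iff' (f := fun k : ℕ ↦ (1 : ℝ) / k ^ 2) 1).2 hasSum_zeta_two

-- Compare the Euler products of both sines factor by factor; the exponents add up to a multiple
-- of `ζ(2)`.
theorem sin_pi_mul_mul_le {a x : ℝ} (ha : 1 ≤ a) (hx : 0 ≤ x) (hax : a * x ≤ 1) :
    sin (π * (a * x)) ≤ a * sin (π * x) * exp (-(a ^ 2 - 1) * x ^ 2 * (π ^ 2 / 6)) := by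
  refine le_of_tendsto_of_tendsto' (tendsto_euler_sin_prod (a * x))
    (((tendsto_euler_sin_prod x).const_mul a).mul
      (hasSum_one_div_nat_add_one_sq.tendsto_sum_nat.const_mul _).rexp) fun N ↦ ?_
  have hfactor (j : ℕ) : 0 ≤ 1 - (a * x) ^ 2 / ((j : ℝ) + 1) ^ 2 ∧
      1 - (a * x) ^ 2 / ((j : ℝ) + 1) ^ 2 ≤ (1 - x ^ 2 / ((j : ℝ) + 1) ^ 2) *
        exp (-(a ^ 2 - 1) * x ^ 2 * (1 / ((j : ℝ) + 1) ^ 2)) := by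
    have hj : 1 ≤ ((j : ℝ) + 1) ^ 2 := one_le_pow₀ (by simp)
    have hle (y : ℝ) (hy₀ : 0 ≤ y) (hy₁ : y ≤ 1) : y ^ 2 / ((j : ℝ) + 1) ^ 2 ≤ 1 :=
      div_le_one_of_le₀ ((pow_le_one₀ hy₀ hy₁).trans hj) (by positivity)
    refine ⟨sub_nonneg.2 (hle _ (by positivity) hax), ?_⟩
    have h := one_sub_sq_mul_le ha (hle x hx
      ((le_mul_of_one_le_left hx ha).trans hax))
    convert h using 3 <;> ring
  calc π * (a * x) * ∏ j ∈ range N, (1 - (a * x) ^ 2 / ((j : ℝ) + 1) ^ 2)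
      ≤ π * (a * x) * ∏ j ∈ range N, ((1 - x ^ 2 / ((j : ℝ) + 1) ^ 2) *
          exp (-(a ^ 2 - 1) * x ^ 2 * (1 / ((j : ℝ) + 1) ^ 2))) := by
        gcongr with j
        exacts [fun j _ ↦ (hfactor j).1, (hfactor _).2]
    _ = _ := by
        rw [prod_mul_distrib, ← exp_sum, ← mul_sum]
        ring

theorem sin_mul_le_mul_sin_mul_exp_s9 {a t : ℝ} (ha : 1 ≤ a) (ht : 0 ≤ t) (hat : a * t ≤ π) :
    sin (a * t) ≤ a * sin t * exp (-((a ^ 2 - 1) / 6) * t ^ 2) := by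
  have harg : π * (t / π) = t := mul_div_cancel₀ t pi_ne_zero
  have hexponent : -(a ^ 2 - 1) * (t / π) ^ 2 * (π ^ 2 / 6) = -((a ^ 2 - 1) / 6) * t ^ 2 := by
    field_simp
  have h := sin_pi_mul_mul_le ha (div_nonneg ht pi_pos.le)
    (by rwa [← mul_div_assoc, div_le_one pi_pos])
  rwa [mul_left_comm, harg, hexponent] at h

-- The constant approximates `√(6 / π) ≈ 1.382`; it must stay below `√2` with some room for the
-- contribution of the side lobes.
theorem mul_sqrt_gaussian_le {x y : ℝ} (hx : 2 ≤ x) (hy : 0 < y) :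
    x * √(π / (y * ((x ^ 2 - 1) / 6))) ≤ π * ((1 + 1 / x) * (1.39 / √y)) := by
  have hx₀ : 0 < x := by linarith
  have hx₂ : 0 < x ^ 2 - 1 := by nlinarith
  have hpole : x ^ 2 / (x ^ 2 - 1) ≤ (1 + 1 / x) ^ 2 := by
    have hfactor : (1 + 1 / x) ^ 2 = (x + 1) ^ 2 / x ^ 2 := by field_simp
    rw [hfactor, div_le_div_iff₀ hx₂ (by positivity)]
    nlinarith [mul_pos hx₂ hx₀]
  have hπ : 6 / π ≤ 1.39 ^ 2 := by
    rw [div_le_iff₀ pi_pos]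
    linarith [pi_gt_d2]
  refine (sq_le_sq₀ (by positivity) (by positivity)).1 ?_
  calc (x * √(π / (y * ((x ^ 2 - 1) / 6)))) ^ 2
      = π ^ 2 * (x ^ 2 / (x ^ 2 - 1) * (6 / π)) / y := by
        rw [mul_pow, sq_sqrt (by positivity)]
        field_simp
    _ ≤ π ^ 2 * ((1 + 1 / x) ^ 2 * 1.39 ^ 2) / y := by gcongr
    _ = (π * ((1 + 1 / x) * (1.39 / √y))) ^ 2 := by
        simp only [mul_pow, div_pow, sq_sqrt hy.le]
        ring

theorem two_div_two_pow_mul_le_div_sqrt {k : ℕ} (hk : 5 ≤ k) :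
    2 / (2 ^ (k + 1) * k) ≤ 0.02 / √(k + 1 : ℝ) := by
  have hk' : (5 : ℝ) ≤ k := mod_cast hk
  have hsqrt : √(k + 1 : ℝ) ≤ (k + 1) / 2 := by
    rw [sqrt_le_iff]
    constructor <;> nlinarith
  have hpow : (2 : ℝ) ^ 6 ≤ 2 ^ (k + 1) := by gcongr <;> simp; omega
  rw [div_le_div_iff₀ (by positivity) (by positivity)]
  nlinarith

theorem norm_dirichletSum_le_gaussian {n : ℕ} (hn : 2 ≤ n) {t : ℝ} (ht : 0 ≤ t)
    (hnt : n * t ≤ π) : ‖dirichletSum n t‖ ≤ n * exp (-((n ^ 2 - 1) / 6) * t ^ 2) := by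
  have hn' : (2 : ℝ) ≤ n := mod_cast hn
  rcases ht.eq_or_lt with rfl | ht₀
  · simpa using norm_dirichletSum_le n 0
  have hsin : 0 < sin t := sin_pos_of_pos_of_lt_pi ht₀ (by nlinarith)
  refine le_of_mul_le_mul_right ?_ hsin
  calc ‖dirichletSum n t‖ * sin t = sin (n * t) := by
        rw [← abs_of_pos hsin, norm_dirichletSum_mul_abs_sin,
          abs_of_nonneg (sin_nonneg_of_nonneg_of_le_pi (by positivity) hnt)]
    _ ≤ n * exp (-((n ^ 2 - 1) / 6) * t ^ 2) * sin t := by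
        rw [mul_right_comm]
        exact sin_mul_le_mul_sin_mul_exp_s9 (by linarith) ht hnt

theorem norm_dirichletSum_le_inv (n : ℕ) {t : ℝ} (ht₀ : 0 < t) (ht : t ≤ π / 2) :
    ‖dirichletSum n t‖ ≤ π / 2 * t⁻¹ := by
  have hsin : 2 / π * t ≤ |sin t| := (mul_le_sin ht₀.le ht).trans (le_abs_self _)
  have h : ‖dirichletSum n t‖ * (2 / π * t) ≤ 1 :=
    calc ‖dirichletSum n t‖ * (2 / π * t) ≤ ‖dirichletSum n t‖ * |sin t| := by gcongr
      _ = |sin (n * t)| := norm_dirichletSum_mul_abs_sin n t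
      _ ≤ 1 := abs_sin_le_one _
  calc ‖dirichletSum n t‖ ≤ 1 / (2 / π * t) := (le_div_iff₀ (by positivity)).2 h
    _ = π / 2 * t⁻¹ := by field_simp

theorem integral_norm_dirichletSum_pow_main_lobe_le {n d : ℕ} (hn : 2 ≤ n) (hd : d ≠ 0) :
    ∫ t in (0 : ℝ)..(π / n), ‖dirichletSum n t‖ ^ d ≤
      n ^ d * (√(π / (d * ((n ^ 2 - 1) / 6))) / 2) := by
  have hn' : (2 : ℝ) ≤ n := mod_cast hn
  have hb : 0 < d * (((n : ℝ) ^ 2 - 1) / 6) := by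
    have : 0 < (n : ℝ) ^ 2 - 1 := by nlinarith
    positivity
  have hend : 0 ≤ π / n := by positivity
  calc ∫ t in (0 : ℝ)..(π / n), ‖dirichletSum n t‖ ^ d
      ≤ ∫ t in (0 : ℝ)..(π / n), n ^ d * exp (-(d * ((n ^ 2 - 1) / 6)) * t ^ 2) := by
        refine intervalIntegral.integral_mono_on hend
          (intervalIntegrable_norm_dirichletSum_pow n d _ _)
          (Continuous.intervalIntegrable (by fun_prop) _ _) fun t ht ↦ ?_
        have hnt : n * t ≤ π := by
          rw [mul_comm, ← le_div_iff₀ (by positivity)]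
          exact ht.2
        refine (pow_le_pow_left₀ (norm_nonneg _)
          (norm_dirichletSum_le_gaussian hn ht.1 hnt) d).trans_eq ?_
        rw [mul_pow, ← exp_nat_mul]
        ring_nf
    _ = n ^ d * ∫ t in Set.Ioc 0 (π / n), exp (-(d * ((n ^ 2 - 1) / 6)) * t ^ 2) := by
        rw [intervalIntegral.integral_const_mul, intervalIntegral.integral_of_le hend]
    _ ≤ n ^ d * ∫ t in Set.Ioi (0 : ℝ), exp (-(d * ((n ^ 2 - 1) / 6)) * t ^ 2) := by
        gcongr n ^ d * ?_
        exact MeasureTheory.setIntegral_mono_set (integrable_exp_neg_mul_sq hb).integrableOn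
          (.of_forall fun _ ↦ (exp_pos _).le) Set.Ioc_subset_Ioi_self.eventuallyLE
    _ = n ^ d * (√(π / (d * ((n ^ 2 - 1) / 6))) / 2) := by rw [integral_gaussian_Ioi]

theorem integral_inv_pow_succ {a b : ℝ} (ha : 0 < a) (hab : a ≤ b) {k : ℕ} (hk : k ≠ 0) :
    ∫ t in a..b, t⁻¹ ^ (k + 1) = (a⁻¹ ^ k - b⁻¹ ^ k) / k := by
  have h0 : (0 : ℝ) ∉ Set.uIcc a b := by
    rw [Set.uIcc_of_le hab]
    exact fun h ↦ ha.not_ge h.1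
  have hpow (t : ℝ) : t⁻¹ ^ (k + 1) = t ^ (-(k + 1 : ℤ)) := by
    rw [inv_pow, zpow_neg]
    norm_cast
  simp_rw [hpow]
  rw [integral_zpow (Or.inr ⟨by omega, h0⟩)]
  rw [neg_add_rev, neg_add_cancel_comm]
  push_cast
  simp only [neg_add_cancel_comm, zpow_neg, zpow_natCast, inv_pow]
  rw [div_neg, ← neg_div, neg_sub]

theorem integral_norm_dirichletSum_pow_side_lobes_le {n k : ℕ} (hn : 2 ≤ n) (hk : k ≠ 0) :
    ∫ t in (π / n)..(π / 2), ‖dirichletSum n t‖ ^ (k + 1) ≤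
      n ^ k * (π / (2 ^ (k + 1) * k)) := by
  have hn' : (2 : ℝ) ≤ n := mod_cast hn
  have hstart : 0 < π / n := by positivity
  have hle : π / n ≤ π / 2 := by gcongr
  calc ∫ t in (π / n)..(π / 2), ‖dirichletSum n t‖ ^ (k + 1)
      ≤ ∫ t in (π / n)..(π / 2), (π / 2) ^ (k + 1) * t⁻¹ ^ (k + 1) := by
        refine intervalIntegral.integral_mono_on hle
          (intervalIntegrable_norm_dirichletSum_pow n _ _ _) ?_ fun t ht ↦ ?_
        · refine ContinuousOn.intervalIntegrable ?_
          rw [Set.uIcc_of_le hle]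
          exact continuousOn_const.mul
            ((continuousOn_id.inv₀ fun t ht ↦ (hstart.trans_le ht.1).ne').pow _)
        · rw [← mul_pow]
          gcongr
          exact norm_dirichletSum_le_inv n (hstart.trans_le ht.1) ht.2
    _ = (π / 2) ^ (k + 1) * ((π / n)⁻¹ ^ k - (π / 2)⁻¹ ^ k) / k := by
        rw [intervalIntegral.integral_const_mul, integral_inv_pow_succ hstart hle hk, mul_div_assoc]
    _ ≤ (π / 2) ^ (k + 1) * (π / n)⁻¹ ^ k / k := by
        gcongr
        exact sub_le_self _ (by positivity)
    _ = n ^ k * (π / (2 ^ (k + 1) * k)) := by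
        rw [inv_div, div_pow, div_pow, pow_succ π]
        field_simp

theorem dirichletMoment_succ_le {n k : ℕ} (hn : 2 ≤ n) (hk : 5 ≤ k) :
    dirichletMoment n (k + 1) ≤ π * (n ^ k * ((1 + 1 / n) * (1.41 / √(k + 1 : ℝ)))) := by
  have hn' : (2 : ℝ) ≤ n := mod_cast hn
  have hmain := integral_norm_dirichletSum_pow_main_lobe_le hn k.succ_ne_zero
  have hside := integral_norm_dirichletSum_pow_side_lobes_le hn (by omega : k ≠ 0)
  have hgauss := mul_sqrt_gaussian_le hn' (by positivity : (0 : ℝ) < k + 1)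
  have htail : 2 / (2 ^ (k + 1) * k) ≤ (1 + 1 / n) * (0.02 / √(k + 1 : ℝ)) :=
    (two_div_two_pow_mul_le_div_sqrt hk).trans
      (le_mul_of_one_le_left (by positivity) (le_add_of_nonneg_right (by positivity)))
  rw [dirichletMoment_eq_two_mul_integral, ← intervalIntegral.integral_add_adjacent_intervals
    (intervalIntegrable_norm_dirichletSum_pow n (k + 1) 0 (π / n))
    (intervalIntegrable_norm_dirichletSum_pow n (k + 1) (π / n) (π / 2))]
  push_cast at hmain
  calc 2 * ((∫ t in (0 : ℝ)..(π / n), ‖dirichletSum n t‖ ^ (k + 1)) +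
        ∫ t in (π / n)..(π / 2), ‖dirichletSum n t‖ ^ (k + 1))
      ≤ 2 * (n ^ (k + 1) * (√(π / ((k + 1) * ((n ^ 2 - 1) / 6))) / 2) +
          n ^ k * (π / (2 ^ (k + 1) * k))) := by gcongr
    _ = n ^ k * (n * √(π / ((k + 1) * ((n ^ 2 - 1) / 6))) + π * (2 / (2 ^ (k + 1) * k))) := by
        ring
    _ ≤ n ^ k * (π * ((1 + 1 / n) * (1.39 / √(k + 1 : ℝ))) +
          π * ((1 + 1 / n) * (0.02 / √(k + 1 : ℝ)))) := by gcongr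
    _ = π * (n ^ k * ((1 + 1 / n) * (1.41 / √(k + 1 : ℝ)))) := by ring

theorem dirichletMoment_three_le (n : ℕ) :
    dirichletMoment n 3 ≤ π * ((n + 1) ^ 2 * √(2 / 3)) := by
  refine (sq_le_sq₀ (dirichletMoment_nonneg n 3) (by positivity)).1 ?_
  calc dirichletMoment n 3 ^ 2 ≤ dirichletMoment n 2 * dirichletMoment n 4 :=
        sq_dirichletMoment_succ_le n 2
    _ = π ^ 2 * (n * ((2 * n ^ 3 + n) / 3)) := by
        rw [dirichletMoment_two, dirichletMoment_four]
        ring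
    _ ≤ π ^ 2 * ((n + 1) ^ 4 * (2 / 3)) := by
        gcongr π ^ 2 * ?_
        rw [← sub_nonneg]
        ring_nf
        positivity
    _ = (π * ((n + 1) ^ 2 * √(2 / 3))) ^ 2 := by
        rw [mul_pow, mul_pow, sq_sqrt (by norm_num)]
        ring

theorem dirichletMoment_four_le (n : ℕ) :
    dirichletMoment n 4 ≤ π * ((n + 2) ^ 3 * √(2 / 4)) := by
  have hsqrt : 2 / 3 ≤ √(2 / 4) := le_sqrt_of_sq_le (by norm_num)
  calc dirichletMoment n 4 = π * ((2 * n ^ 3 + n) / 3) := dirichletMoment_four n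
    _ ≤ π * ((n + 2) ^ 3 * (2 / 3)) := by
        gcongr
        rw [← sub_nonneg]
        ring_nf
        positivity
    _ ≤ π * ((n + 2) ^ 3 * √(2 / 4)) := by gcongr

theorem dirichletMoment_six_le {n : ℕ} (hn : 2 ≤ n) :
    dirichletMoment n 6 ≤ π * (0.6 * (n ^ 5 + n ^ 4)) := by
  have hsqrt : 1.41 / √6 ≤ 0.6 := by
    rw [div_le_iff₀ (by positivity), ← div_le_iff₀' (by norm_num)]
    exact le_sqrt_of_sq_le (by norm_num)
  calc dirichletMoment n 6 ≤ π * (n ^ 5 * ((1 + 1 / n) * (1.41 / √6))) := by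
        convert dirichletMoment_succ_le hn (le_refl 5) using 6
        norm_num
    _ ≤ π * (n ^ 5 * ((1 + 1 / n) * 0.6)) := by gcongr
    _ = π * (0.6 * (n ^ 5 + n ^ 4)) := by field_simp

theorem dirichletMoment_five_le {n : ℕ} (hn : 2 ≤ n) :
    dirichletMoment n 5 ≤ π * ((n + 3) ^ 4 * √(2 / 5)) := by
  refine (sq_le_sq₀ (dirichletMoment_nonneg n 5) (by positivity)).1 ?_
  calc dirichletMoment n 5 ^ 2 ≤ dirichletMoment n 4 * dirichletMoment n 6 :=
        sq_dirichletMoment_succ_le n 4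
    _ ≤ dirichletMoment n 4 * (π * (0.6 * (n ^ 5 + n ^ 4))) := by
        gcongr
        exacts [dirichletMoment_nonneg n 4, dirichletMoment_six_le hn]
    _ = π ^ 2 * (0.2 * (2 * n ^ 3 + n) * (n ^ 5 + n ^ 4)) := by
        rw [dirichletMoment_four]
        ring
    _ ≤ π ^ 2 * ((n + 3) ^ 8 * (2 / 5)) := by
        gcongr π ^ 2 * ?_
        rw [← sub_nonneg]
        ring_nf
        positivity
    _ = (π * ((n + 3) ^ 4 * √(2 / 5))) ^ 2 := by
        rw [mul_pow, mul_pow, sq_sqrt (by norm_num)]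
        ring

theorem dirichletMoment_le_of_five_le {n k : ℕ} (hn : 2 ≤ n) (hk : 5 ≤ k) :
    dirichletMoment n (k + 1) ≤ π * ((n + k - 1) ^ k * √(2 / (k + 1))) := by
  have hn' : (0 : ℝ) < n := by positivity
  have hk' : (5 : ℝ) ≤ k := mod_cast hk
  have hbase : 0 ≤ (n : ℝ) + k - 1 := by linarith
  have hpow : (n : ℝ) ^ k * (1 + 1 / n) ≤ (n + k - 1) ^ k :=
    calc (n : ℝ) ^ k * (1 + 1 / n) ≤ n ^ k * (1 + 1 / n) ^ k := by
          gcongr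
          exact le_self_pow₀ (by simp) (by omega)
      _ = (n + 1) ^ k := by
          rw [← mul_pow]
          field_simp
      _ ≤ (n + k - 1) ^ k := by
          gcongr
          linarith
  have hsqrt : 1.41 ≤ √2 := le_sqrt_of_sq_le (by norm_num)
  calc dirichletMoment n (k + 1) ≤ π * (n ^ k * ((1 + 1 / n) * (1.41 / √(k + 1 : ℝ)))) :=
        dirichletMoment_succ_le hn hk
    _ = π * (n ^ k * (1 + 1 / n) * (1.41 / √(k + 1 : ℝ))) := by ring
    _ ≤ π * ((n + k - 1) ^ k * (√2 / √(k + 1 : ℝ))) := by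
        gcongr
    _ = π * ((n + k - 1) ^ k * √(2 / (k + 1))) := by rw [sqrt_div zero_le_two]

theorem dirichletMoment_le {n d : ℕ} (hn : 2 ≤ n) (hd : 2 ≤ d) :
    dirichletMoment n d ≤ π * (((n : ℝ) + d - 2) ^ (d - 1) * √(2 / d)) := by
  obtain rfl | rfl | rfl | rfl | ⟨k, hk, rfl⟩ :
      d = 2 ∨ d = 3 ∨ d = 4 ∨ d = 5 ∨ ∃ k, 5 ≤ k ∧ d = k + 1 := by
    rcases lt_or_ge d 6 with h | h
    · omega
    · exact .inr (.inr (.inr (.inr ⟨d - 1, by omega, by omega⟩)))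
  · simp [dirichletMoment_two]
  · convert dirichletMoment_three_le n using 4 <;> norm_num
    ring
  · convert dirichletMoment_four_le n using 4 <;> norm_num
    ring
  · convert dirichletMoment_five_le hn using 4 <;> norm_num
    ring
  · rw [Nat.cast_succ, Nat.add_sub_cancel]
    convert dirichletMoment_le_of_five_le hn hk using 4
    ring

theorem card_layer_le {n d : ℕ} (hd : 1 ≤ d) (hdn : d ≤ n) (s : ℕ) :
    (#{x : Fin d → Fin n | ∑ i, (x i : ℕ) = s} : ℝ) ≤
      ((n : ℝ) + d - 2) ^ (d - 1) * √(2 / d) := by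
  rcases hd.eq_or_lt with rfl | hd₂
  · have hone : #{x : Fin 1 → Fin n | ∑ i, (x i : ℕ) = s} ≤ 1 := by
      refine card_le_one.2 fun x hx y hy ↦ funext fun i ↦ Fin.ext ?_
      simp only [univ_unique, sum_singleton, mem_filter_univ] at hx hy
      rw [Subsingleton.elim i default, hx, hy]
    have hsqrt : 1 ≤ √(2 : ℝ) := one_le_sqrt.2 one_le_two
    simpa using (Nat.cast_le_one.2 hone).trans hsqrt
  · exact le_of_mul_le_mul_left ((pi_mul_card_layer_le_dirichletMoment n d s).trans
      (dirichletMoment_le (hd₂.trans_le hdn) hd₂)) pi_pos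

theorem kthSmallest_eq_orderEmbOfFin {B : Finset ℕ} {d : ℕ} (h : #B = d) (i : Fin d) :
    kthSmallest B i = B.orderEmbOfFin h i := by
  rw [kthSmallest, orderEmbOfFin_apply, List.getD_eq_getElem]
  rfl

theorem subset_antichain_bound_general {ι α : Type*} [Fintype ι] [Fintype α] [LinearOrder α]
    {d : ℕ} (hd : 1 ≤ d) (f : ι → Fin d ↪o α) (hf : ∀ a b, ⇑(f a) ≤ f b → a = b) :
    (Fintype.card ι : ℝ) ≤
      (1 / d.factorial) * ((Fintype.card α : ℝ) + d - 2) ^ (d - 1) * √(2 / d) := by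
  rcases isEmpty_or_nonempty ι with _ | ⟨⟨a⟩⟩
  · rw [Fintype.card_eq_zero, Nat.cast_zero]
    rcases hd.eq_or_lt with rfl | hd₂
    · simp
    · have hbase : 0 ≤ (Fintype.card α : ℝ) + d - 2 := by
        have : (2 : ℝ) ≤ d := mod_cast hd₂
        linarith [(Fintype.card α).cast_nonneg (α := ℝ)]
      positivity
  have hdn : d ≤ Fintype.card α := by simpa using Fintype.card_le_of_injective _ (f a).injective
  let e : α ≃o Fin (Fintype.card α) := (Fintype.orderIsoFinOfCardEq α rfl).symm
  have hlayer := card_mul_factorial_le_card_middle_layer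
    (fun a ↦ (f a).trans e.toOrderEmbedding) fun a b h ↦ hf a b fun i ↦ e.le_iff_le.1 (h i)
  have hbound := (Nat.cast_le (α := ℝ).2 hlayer).trans (card_layer_le hd hdn _)
  rw [Nat.cast_mul, ← le_div_iff₀ (by positivity)] at hbound
  exact hbound.trans_eq (by ring)

/-- Every antichain `U` in the partial order on `d`-element subsets of an `n`-element set
`X` of positive integers satisfies `|U| ≤ (1/d!) · (n + d - 2)^(d-1) · √(2/d)`. -/
theorem subset_antichain_bound (d n : ℕ) (hd : 1 ≤ d) (hn : d ≤ n)
    (X : Finset ℕ) (hX : ∀ x ∈ X, 0 < x) (hcard : X.card = n)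
    (U : Finset (Finset ℕ)) (hU : U ⊆ X.powersetCard d)
    (hanti : IsAntichain (SubsetLE d) (U : Set (Finset ℕ))) :
    (U.card : ℝ) ≤ (1 / d.factorial) * ((n : ℝ) + d - 2) ^ (d - 1) * Real.sqrt (2 / d) := by
  have hmem (B : U) : B.1 ⊆ X ∧ #B.1 = d := mem_powersetCard.1 (hU B.2)
  let f (B : U) : Fin d ↪o X :=
    (B.1.orderIsoOfFin (hmem B).2).toOrderEmbedding.trans (Subtype.orderEmbedding (hmem B).1)
  have hf (B C : U) (h : ⇑(f B) ≤ f C) : B = C := by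
    refine Subtype.ext (hanti.eq B.2 C.2 fun i hi ↦ ?_)
    rw [kthSmallest_eq_orderEmbOfFin (hmem B).2 ⟨i, hi⟩,
      kthSmallest_eq_orderEmbOfFin (hmem C).2 ⟨i, hi⟩]
    exact h ⟨i, hi⟩
  simpa [hcard] using subset_antichain_bound_general hd f hf
end
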